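/- Let n ≥ 4 and let P be a polytope realizing the type D_n model via a bijection φ from M_n to the facets of P. Then P is not combinatorially equivalent to any product Q × R of two polytopes each of dimension at least 1, and P has at least 2n + 3 facets each of which is not combinatorially equivalent to any such nontrivial product. -/

import Mathlib

open Pointwise

namespace GalD

/-- A polytope in `ℝ^d`: the convex hull of a finite set of points. -/
def IsPolytope {d : ℕ} (P : Set (Fin d → ℝ)) : Prop :=
  ∃ V : Finset (Fin d → ℝ), P = convexHull ℝ (V : Set (Fin d → ℝ))

/-- A face of `P`: a nonempty exposed face of `P` (`P` itself included). -/
def IsFaceOf {d : ℕ} (F P : Set (Fin d → ℝ)) : Prop :=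
  F.Nonempty ∧ IsExposed ℝ P F

/-- The dimension of a set: the rank of the direction of its affine span. -/
noncomputable def polyDim {d : ℕ} (P : Set (Fin d → ℝ)) : ℕ :=
  Module.finrank ℝ (affineSpan ℝ P).direction

/-- A facet: a face of dimension `dim P - 1`. -/
def IsFacetOf {d : ℕ} (F P : Set (Fin d → ℝ)) : Prop :=
  IsFaceOf F P ∧ polyDim F + 1 = polyDim P

/-- A vertex: a point spanning a face of dimension 0. -/
def IsVertexOf {d : ℕ} (v : Fin d → ℝ) (P : Set (Fin d → ℝ)) : Prop :=
  IsFaceOf {v} P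

/-- A simple polytope: every vertex is contained in exactly `dim P` facets. -/
def IsSimplePolytope {d : ℕ} (P : Set (Fin d → ℝ)) : Prop :=
  IsPolytope P ∧ ∀ v, IsVertexOf v P →
    {F : Set (Fin d → ℝ) | IsFacetOf F P ∧ v ∈ F}.ncard = polyDim P

/-- A flag polytope: simple, and every collection of pairwise intersecting facets
has a nonempty common intersection. -/
def IsFlagPolytope {d : ℕ} (P : Set (Fin d → ℝ)) : Prop :=
  IsSimplePolytope P ∧
  ∀ 𝒮 : Set (Set (Fin d → ℝ)), 𝒮.Nonempty → (∀ F ∈ 𝒮, IsFacetOf F P) →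
    (∀ F ∈ 𝒮, ∀ G ∈ 𝒮, (F ∩ G).Nonempty) → (⋂₀ 𝒮).Nonempty

/-- Combinatorial equivalence: an order isomorphism between the face posets. -/
def CombEquiv {d₁ d₂ : ℕ} (P : Set (Fin d₁ → ℝ)) (Q : Set (Fin d₂ → ℝ)) : Prop :=
  Nonempty ({F : Set (Fin d₁ → ℝ) // IsFaceOf F P} ≃o
            {G : Set (Fin d₂ → ℝ) // IsFaceOf G Q})

/-- The product of a set in `ℝ^{d₁}` and a set in `ℝ^{d₂}`, inside `ℝ^{d₁+d₂}`. -/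
def polyProd {d₁ d₂ : ℕ} (Q : Set (Fin d₁ → ℝ)) (R : Set (Fin d₂ → ℝ)) :
    Set (Fin (d₁ + d₂) → ℝ) :=
  {x | (fun i => x (Fin.castAdd d₂ i)) ∈ Q ∧ (fun j => x (Fin.natAdd d₁ j)) ∈ R}

/-- `P` is not combinatorially equivalent to a nontrivial product of two polytopes. -/
def Indecomposable {d : ℕ} (P : Set (Fin d → ℝ)) : Prop :=
  ¬ ∃ (d₁ d₂ : ℕ) (Q : Set (Fin d₁ → ℝ)) (R : Set (Fin d₂ → ℝ)),
    IsPolytope Q ∧ IsPolytope R ∧ 1 ≤ polyDim Q ∧ 1 ≤ polyDim R ∧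
    CombEquiv P (polyProd Q R)

/-- A building set on the ground set `V`. -/
structure IsBuildingSetOn {m : ℕ} (V : Finset (Fin m)) (B : Finset (Finset (Fin m))) :
    Prop where
  subset_ground : ∀ S ∈ B, S ⊆ V
  nonempty_mem : ∀ S ∈ B, S.Nonempty
  singleton_mem : ∀ i ∈ V, ({i} : Finset (Fin m)) ∈ B
  ground_mem : V ∈ B
  union_mem : ∀ S₁ ∈ B, ∀ S₂ ∈ B, (S₁ ∩ S₂).Nonempty → S₁ ∪ S₂ ∈ B

/-- A connected building set on `[m]`. -/
def IsConnectedBuildingSet (m : ℕ) (B : Finset (Finset (Fin m))) : Prop :=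
  IsBuildingSetOn (Finset.univ : Finset (Fin m)) B

/-- The nestohedron `P_B`: the Minkowski sum of the simplices `Δ_S`, `S ∈ B`. -/
noncomputable def nestohedron (m : ℕ) (B : Finset (Finset (Fin m))) :
    Set (Fin m → ℝ) :=
  ∑ S ∈ B, convexHull ℝ ((fun i => (Pi.single i 1 : Fin m → ℝ)) '' (S : Set (Fin m)))

/-- A diagonal of a convex `N`-gon with vertices labelled by `ZMod N`. -/
def IsDiag (N : ℕ) (e : Finset (ZMod N)) : Prop :=
  ∃ a b : ZMod N, e = {a, b} ∧ b ≠ a ∧ b ≠ a + 1 ∧ b ≠ a - 1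

/-- `c` lies strictly between `a` and `b` on the arc from `a` to `b` (counterclockwise). -/
def StrictBtw (N : ℕ) (a c b : ZMod N) : Prop :=
  0 < (c - a).val ∧ (c - a).val < (b - a).val

/-- Two diagonals cross: their endpoints alternate around the circle. -/
def Crosses (N : ℕ) (e f : Finset (ZMod N)) : Prop :=
  ∃ a b c d : ZMod N, e = {a, b} ∧ f = {c, d} ∧
    StrictBtw N a c b ∧ StrictBtw N b d a

/-- Image of a diagonal under the central symmetry `a ↦ a + n` of the `2n`-gon. -/
def centralSym (n : ℕ) (e : Finset (ZMod (2 * n))) : Finset (ZMod (2 * n)) :=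
  e.image (· + (n : ZMod (2 * n)))

/-- A diameter of the `2n`-gon: a diagonal `{a, a + n}`. -/
def IsDiameter (n : ℕ) (e : Finset (ZMod (2 * n))) : Prop :=
  ∃ a : ZMod (2 * n), e = {a, a + (n : ZMod (2 * n))}

/-- Raw elements of the type `D_n` model: symmetric pairs of diagonals,
red diameters and blue diameters. -/
inductive DElem (n : ℕ) where
  | pair : Finset (Finset (ZMod (2 * n))) → DElem n
  | red  : Finset (ZMod (2 * n)) → DElem n
  | blue : Finset (ZMod (2 * n)) → DElem n

/-- Membership in the set `M_n` of the type `D_n` model. -/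
def memM (n : ℕ) : DElem n → Prop
  | .pair s => ∃ e, IsDiag (2 * n) e ∧ ¬ IsDiameter n e ∧ s = {e, centralSym n e}
  | .red e => IsDiag (2 * n) e ∧ IsDiameter n e
  | .blue e => IsDiag (2 * n) e ∧ IsDiameter n e

/-- Compatibility of elements of the type `D_n` model. -/
def DCompat (n : ℕ) : DElem n → DElem n → Prop
  | .pair s, .pair t => ∀ e ∈ s, ∀ f ∈ t, ¬ Crosses (2 * n) e f
  | .pair s, .red e => ∀ f ∈ s, ¬ Crosses (2 * n) e f
  | .pair s, .blue e => ∀ f ∈ s, ¬ Crosses (2 * n) e f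
  | .red e, .pair s => ∀ f ∈ s, ¬ Crosses (2 * n) e f
  | .blue e, .pair s => ∀ f ∈ s, ¬ Crosses (2 * n) e f
  | .red _, .red _ => True
  | .blue _, .blue _ => True
  | .red e, .blue f => e = f
  | .blue e, .red f => e = f

/-- The set `M_n` of the type `D_n` model, as a type. -/
def MSet (n : ℕ) := {x : DElem n // memM n x}

/-- `P` realizes the type `D_n` model via the bijection `φ`. -/
def RealizesDWith (n : ℕ) {d : ℕ} (P : Set (Fin d → ℝ))
    (φ : MSet n → Set (Fin d → ℝ)) : Prop :=
  IsPolytope P ∧ IsFlagPolytope P ∧ polyDim P = n ∧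
  (∀ x, IsFacetOf (φ x) P) ∧ Function.Injective φ ∧
  (∀ F, IsFacetOf F P → ∃ x, φ x = F) ∧
  ∀ x y : MSet n, x ≠ y → ((φ x ∩ φ y).Nonempty ↔ DCompat n x.1 y.1)

/-- `P` realizes the type `D_n` model. -/
def RealizesD (n : ℕ) {d : ℕ} (P : Set (Fin d → ℝ)) : Prop :=
  ∃ φ, RealizesDWith n P φ

/-- Elements of the type `A_k` model: diagonals of a convex `(k+3)`-gon. -/
def ASet (k : ℕ) := {e : Finset (ZMod (k + 3)) // IsDiag (k + 3) e}

/-- `P` realizes the type `A_k` model via the bijection `φ`. -/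
def RealizesAWith (k : ℕ) {d : ℕ} (P : Set (Fin d → ℝ))
    (φ : ASet k → Set (Fin d → ℝ)) : Prop :=
  IsPolytope P ∧ IsFlagPolytope P ∧ polyDim P = k ∧
  (∀ x, IsFacetOf (φ x) P) ∧ Function.Injective φ ∧
  (∀ F, IsFacetOf F P → ∃ x, φ x = F) ∧
  ∀ x y : ASet k, x ≠ y → ((φ x ∩ φ y).Nonempty ↔ ¬ Crosses (k + 3) x.1 y.1)

/-- `P` realizes the type `A_k` model. -/
def RealizesA (k : ℕ) {d : ℕ} (P : Set (Fin d → ℝ)) : Prop :=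
  ∃ φ, RealizesAWith k P φ

/-- A closed halfspace in `ℝ^d`. -/
def IsClosedHalfspace {d : ℕ} (H : Set (Fin d → ℝ)) : Prop :=
  ∃ (l : (Fin d → ℝ) →ₗ[ℝ] ℝ) (c : ℝ), l ≠ 0 ∧ H = {x | l x ≤ c}

/-- `P'` is obtained from `P` by shaving off a face of codimension 2. -/
def ObtainedByShaving {d : ℕ} (P P' : Set (Fin d → ℝ)) : Prop :=
  ∃ G H : Set (Fin d → ℝ), IsFaceOf G P ∧ polyDim G + 2 = polyDim P ∧
    IsClosedHalfspace H ∧ G ∩ H = ∅ ∧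
    (∀ v, IsVertexOf v P → v ∉ G → v ∈ interior H) ∧ P' = P ∩ H

/-- The restriction `B|_S` of a building set. -/
def restrictBS {m : ℕ} (B : Finset (Finset (Fin m))) (S : Finset (Fin m)) :
    Finset (Finset (Fin m)) :=
  B.filter (· ⊆ S)

/-- The contraction `B / S` of a building set. -/
def contractBS {m : ℕ} (B : Finset (Finset (Fin m))) (S : Finset (Fin m)) :
    Finset (Finset (Fin m)) :=
  (B.filter (fun S'' => ¬ S'' ⊆ S)).image (fun S'' => S'' \ S)

/-- The subset of the nestohedron `P_B` on which `x ↦ ∑_{i ∈ S} x i` is minimized. -/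
def minFace (m : ℕ) (B : Finset (Finset (Fin m))) (S : Finset (Fin m)) :
    Set (Fin m → ℝ) :=
  {x ∈ nestohedron m B | ∀ y ∈ nestohedron m B, ∑ i ∈ S, x i ≤ ∑ i ∈ S, y i}

/-!
Join two facets of a polytope by an edge when they are disjoint. In a nontrivial product every
facet comes from a facet of one of the two factors, and facets that come from different factors
intersect, so this graph is disconnected; a polytope whose facet graph is connected is therefore
indecomposable. In a simple polytope the facets of a facet `F` are the sets `F ∩ G` with `G ≠ F` a
facet meeting `F`, so `F` is indecomposable as soon as the facet graph of `P`, restricted to these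
`G`, is connected.

For the type `D_n` model the facet graph is the incompatibility graph on `M_n`. A red diameter is
adjacent to every blue diameter other than itself, so three diameters already make the colored
diameters a connected crown, and a pair `{d, d̄}` with `d = {c, c + k}` is adjacent to both
colors of the `k - 1` diameters through `c + 1, …, c + k - 1`. This yields connectedness of the
whole graph, of its restriction to the elements compatible with a colored diameter, and, when
`n ≥ 4`, of its restriction to the elements compatible with a pair with `k = 2`, where one diameter
is lost. There are `2n` colored diameters and `n` pairs with `k = 2`.
-/

section Exposed

variable {E : Type*} [AddCommGroup E] [Module ℝ E] [TopologicalSpace E]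

theorem mem_toExposed_iff_of_mem {l : StrongDual ℝ E} {s : Set E} {x y : E}
    (hx : x ∈ l.toExposed s) : y ∈ l.toExposed s ↔ y ∈ s ∧ l y = l x :=
  ⟨fun hy ↦ ⟨hy.1, (hx.2 y hy.1).antisymm (hy.2 x hx.1)⟩,
    fun hy ↦ ⟨hy.1, fun z hz ↦ (hx.2 z hz).trans_eq hy.2.symm⟩⟩

theorem lt_of_mem_toExposed_of_notMem {l : StrongDual ℝ E} {s : Set E} {x y : E}
    (hx : x ∈ l.toExposed s) (hy : y ∈ s) (hys : y ∉ l.toExposed s) : l y < l x :=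
  (hx.2 y hy).lt_of_ne fun h ↦ hys ((mem_toExposed_iff_of_mem hx).2 ⟨hy, h⟩)

theorem mem_toExposed_convexHull_iff {l : StrongDual ℝ E} {s : Set E} {x : E} :
    x ∈ l.toExposed (convexHull ℝ s) ↔ x ∈ convexHull ℝ s ∧ ∀ y ∈ s, l y ≤ l x :=
  and_congr_right fun _ ↦ ⟨fun h y hy ↦ h y (subset_convexHull ℝ s hy), fun h _ hy ↦
    convexHull_min h (convex_halfSpace_le l.toLinearMap.isLinear (l x)) hy⟩

theorem eq_convexHull_inter_of_isExposed [T2Space E] [IsTopologicalAddGroup E]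
    [ContinuousSMul ℝ E] [LocallyConvexSpace ℝ E] {s t : Set E} (hs : s.Finite)
    (ht : IsExposed ℝ (convexHull ℝ s) t) : t = convexHull ℝ (s ∩ t) := by
  have ht_convex : Convex ℝ t := ht.convex (convex_convexHull ℝ s)
  have ht_compact : IsCompact t := ht.isCompact (hs.isCompact_convexHull ℝ)
  have hext : t.extremePoints ℝ ⊆ s ∩ t := fun x hx ↦
    ⟨extremePoints_convexHull_subset (ht.isExtreme.extremePoints_subset_extremePoints hx), hx.1⟩
  refine Set.Subset.antisymm ?_ (convexHull_min Set.inter_subset_right ht_convex)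
  calc t = closure (convexHull ℝ (t.extremePoints ℝ)) :=
        (closure_convexHull_extremePoints ht_compact ht_convex).symm
    _ ⊆ convexHull ℝ (s ∩ t) := closure_minimal (convexHull_mono hext)
        ((hs.inter_of_left t).isCompact_convexHull ℝ).isClosed

end Exposed

theorem vectorSpan_le_ker_iff {E F : Type*} [AddCommGroup E] [Module ℝ E] [AddCommGroup F]
    [Module ℝ F] {f : E →ₗ[ℝ] F} {s : Set E} :
    vectorSpan ℝ s ≤ LinearMap.ker f ↔ ∀ x ∈ s, ∀ y ∈ s, f x = f y := by
  simp [vectorSpan_def, Submodule.span_le, Set.vsub_subset_iff, sub_eq_zero]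

theorem exists_pos_forall_add_mul_neg {ι : Type*} {s : Set ι} (hs : s.Finite) {f : ι → ℝ}
    (g : ι → ℝ) (hf : ∀ i ∈ s, f i < 0) : ∃ ε > 0, ∀ i ∈ s, f i + ε * g i < 0 := by
  have hev : ∀ᶠ ε in nhdsWithin (0 : ℝ) (Set.Ioi 0), ∀ i ∈ s, f i + ε * g i < 0 := by
    refine (hs.eventually_all).2 fun i hi ↦ nhdsWithin_le_nhds ?_
    have hcont : ContinuousAt (fun ε : ℝ ↦ f i + ε * g i) 0 := by fun_prop
    exact hcont.eventually_lt_const (by simpa using hf i hi)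
  obtain ⟨ε, hε, hε_pos⟩ := (hev.and self_mem_nhdsWithin).exists
  exact ⟨ε, hε_pos, hε⟩

theorem exists_pos_forall_add_mul_nonpos {ι : Type*} {s : Finset ι} {f g : ι → ℝ}
    (hg : ∀ i ∈ s, g i ≤ 0) (hfg : ∀ i ∈ s, 0 < f i → g i < 0) (hf : ∃ i ∈ s, 0 < f i) :
    ∃ r > 0, (∀ i ∈ s, f i + r * g i ≤ 0) ∧ ∃ i ∈ s, 0 < f i ∧ f i + r * g i = 0 := by
  obtain ⟨j, hj, hj_max⟩ := (s.filter (0 < f ·)).exists_max_image (fun i ↦ f i / -g i)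
    (by simpa [Finset.Nonempty] using hf)
  simp only [Finset.mem_filter, and_imp] at hj hj_max
  have hgj : g j < 0 := hfg j hj.1 hj.2
  have hr_pos : 0 < f j / -g j := div_pos hj.2 (neg_pos.2 hgj)
  refine ⟨f j / -g j, hr_pos, fun i hi ↦ ?_, j, hj.1, hj.2, ?_⟩
  · obtain hfi | hfi := le_or_gt (f i) 0
    · exact add_nonpos hfi (mul_nonpos_of_nonneg_of_nonpos hr_pos.le (hg i hi))
    · have := (div_le_iff₀ (neg_pos.2 (hfg i hi hfi))).1 (hj_max i hi hfi)
      linarith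
  · rw [div_neg, neg_mul, div_mul_cancel₀ _ hgj.ne, add_neg_cancel]

section Faces

variable {d : ℕ} {F G P : Set (Fin d → ℝ)}

theorem isFaceOf_iff : IsFaceOf F P ↔ F.Nonempty ∧ ∃ l : StrongDual ℝ _, F = l.toExposed P :=
  and_congr_right fun hF ↦ ⟨fun h ↦ h hF, fun h _ ↦ h⟩

theorem isFaceOf_self (hP : P.Nonempty) : IsFaceOf P P :=
  ⟨hP, .refl P⟩

theorem IsFaceOf.subset (hF : IsFaceOf F P) : F ⊆ P :=
  hF.2.subset

theorem IsFaceOf.inter (hF : IsFaceOf F P) (hG : IsFaceOf G P) (h : (F ∩ G).Nonempty) :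
    IsFaceOf (F ∩ G) P :=
  ⟨h, hF.2.inter hG.2⟩

theorem IsFaceOf.of_subset (hG : IsFaceOf G P) (hF : IsFaceOf F P) (h : G ⊆ F) : IsFaceOf G F :=
  ⟨hG.1, hG.2.mono hF.subset h⟩

theorem IsPolytope.isCompact (hP : IsPolytope P) : IsCompact P := by
  obtain ⟨V, rfl⟩ := hP
  exact V.finite_toSet.isCompact_convexHull ℝ

theorem IsFaceOf.isPolytope (hF : IsFaceOf F P) (hP : IsPolytope P) : IsPolytope F := by
  obtain ⟨V, rfl⟩ := hP
  refine ⟨(V.finite_toSet.inter_of_left F).toFinset, ?_⟩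
  rw [Set.Finite.coe_toFinset]
  exact eq_convexHull_inter_of_isExposed V.finite_toSet hF.2

theorem IsPolytope.finite_setOf_isFaceOf (hP : IsPolytope P) : {F | IsFaceOf F P}.Finite := by
  obtain ⟨V, rfl⟩ := hP
  refine .of_injOn (f := ((V : Set _) ∩ ·)) (fun F _ ↦ Set.inter_subset_left) ?_
    V.finite_toSet.powerset
  intro F hF G hG (h : (V : Set _) ∩ F = (V : Set _) ∩ G)
  rw [eq_convexHull_inter_of_isExposed V.finite_toSet hF.2, h,
    ← eq_convexHull_inter_of_isExposed V.finite_toSet hG.2]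

/- If `F` maximizes `l` over `P` and `G` maximizes `m` over `F`, then `G` maximizes `l + ε • m` over
`P` for small `ε > 0`. -/
theorem IsFaceOf.trans (hG : IsFaceOf G F) (hF : IsFaceOf F P) (hP : IsPolytope P) :
    IsFaceOf G P := by
  obtain ⟨V, rfl⟩ := hP
  have hG_convex : Convex ℝ G := hG.2.convex (hF.2.convex (convex_convexHull ℝ _))
  obtain ⟨-, l, rfl⟩ := isFaceOf_iff.1 hF
  obtain ⟨⟨g, hg⟩, m, rfl⟩ := isFaceOf_iff.1 hG
  obtain ⟨ε, hε_pos, hε⟩ : ∃ ε > 0, ∀ w ∈ (V : Set _) \ l.toExposed (convexHull ℝ V),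
      l w - l g + ε * (m w - m g) < 0 :=
    exists_pos_forall_add_mul_neg V.finite_toSet.sdiff _ fun w hw ↦ sub_neg.2 <|
      lt_of_mem_toExposed_of_notMem hg.1 (subset_convexHull ℝ _ hw.1) hw.2
  have hgH : g ∈ (l + ε • m).toExposed (convexHull ℝ (V : Set (Fin d → ℝ))) := by
    refine mem_toExposed_convexHull_iff.2 ⟨hg.1.1, fun w hw ↦ ?_⟩
    simp only [add_apply, smul_apply, smul_eq_mul]
    by_cases hwF : w ∈ l.toExposed (convexHull ℝ (V : Set (Fin d → ℝ)))
    · rw [((mem_toExposed_iff_of_mem hg.1).1 hwF).2]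
      gcongr
      exact hg.2 w hwF
    · linarith [hε w ⟨hw, hwF⟩]
  refine isFaceOf_iff.2 ⟨hG.1, l + ε • m, Set.Subset.antisymm (fun x hx ↦ ?_) ?_⟩
  · refine (mem_toExposed_iff_of_mem hgH).2 ⟨hx.1.1, ?_⟩
    simp [((mem_toExposed_iff_of_mem hg.1).1 hx.1).2, ((mem_toExposed_iff_of_mem hg).1 hx).2]
  · rw [eq_convexHull_inter_of_isExposed V.finite_toSet
      (ContinuousLinearMap.toExposed.isExposed (l := l + ε • m))]
    refine convexHull_min (fun w hw ↦ ?_) hG_convex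
    have hw_eq : l w + ε * m w = l g + ε * m g := ((mem_toExposed_iff_of_mem hgH).1 hw.2).2
    have hwF : w ∈ l.toExposed (convexHull ℝ (V : Set (Fin d → ℝ))) := by
      by_contra hwF
      linarith [hε w ⟨hw.1, hwF⟩]
    rw [((mem_toExposed_iff_of_mem hg.1).1 hwF).2, add_right_inj,
      mul_right_inj' hε_pos.ne'] at hw_eq
    exact (mem_toExposed_iff_of_mem hg).2 ⟨hwF, hw_eq⟩

end Faces

section Dimension

variable {d : ℕ} {C F G P S : Set (Fin d → ℝ)}

theorem polyDim_eq_finrank_vectorSpan : polyDim P = Module.finrank ℝ (vectorSpan ℝ P) := by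
  rw [polyDim, direction_affineSpan]

theorem polyDim_singleton (v : Fin d → ℝ) : polyDim {v} = 0 := by
  simp [polyDim_eq_finrank_vectorSpan]

theorem IsFaceOf.polyDim_lt (hG : IsFaceOf G P) (hne : G ≠ P) : polyDim G < polyDim P := by
  obtain ⟨p, hpP, hpG⟩ := Set.exists_of_ssubset (hG.subset.ssubset_of_ne hne)
  obtain ⟨⟨g, hg⟩, l, rfl⟩ := isFaceOf_iff.1 hG
  simp only [polyDim_eq_finrank_vectorSpan]
  refine Submodule.finrank_lt_finrank_of_lt
    ((vectorSpan_mono ℝ hG.subset).lt_of_not_ge fun hle ↦ ?_)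
  have hker : vectorSpan ℝ (l.toExposed P) ≤ LinearMap.ker l.toLinearMap :=
    vectorSpan_le_ker_iff.2 fun x hx y hy ↦ ((mem_toExposed_iff_of_mem hy).1 hx).2
  exact (lt_of_mem_toExposed_of_notMem hg hpP hpG).ne
    (vectorSpan_le_ker_iff.1 (hle.trans hker) p hpP g hg.1)

theorem exists_strongDual_of_polyDim_lt (h : polyDim S < polyDim P) :
    ∃ m : StrongDual ℝ (Fin d → ℝ), (∀ x ∈ S, ∀ y ∈ S, m x = m y) ∧
      ∃ x ∈ P, ∃ y ∈ P, m x ≠ m y := by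
  simp only [polyDim_eq_finrank_vectorSpan] at h
  obtain ⟨v, hvP, hvS⟩ := SetLike.not_le_iff_exists.1 fun hle ↦
    (Submodule.finrank_mono hle).not_gt h
  obtain ⟨m, hmv, hmS⟩ := Submodule.exists_dual_map_eq_bot_of_notMem hvS inferInstance
  refine ⟨m.toContinuousLinearMap,
    vectorSpan_le_ker_iff.1 (LinearMap.le_ker_iff_map.2 hmS), ?_⟩
  by_contra! hconst
  exact hmv ((vectorSpan_le_ker_iff (f := m)).2 hconst hvP)

theorem exists_strongDual_lt_of_polyDim_lt {V : Set (Fin d → ℝ)} {g : Fin d → ℝ} (hg : g ∈ S)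
    (h : polyDim S < polyDim (convexHull ℝ V)) :
    ∃ m : StrongDual ℝ (Fin d → ℝ), (∀ x ∈ S, m x = m g) ∧ ∃ w ∈ V, m g < m w := by
  obtain ⟨m, hmS, x, hx, y, hy, hxy⟩ := exists_strongDual_of_polyDim_lt h
  obtain ⟨w, hwV, hw⟩ : ∃ w ∈ V, m w ≠ m g := by
    by_contra! hV
    have hsub : convexHull ℝ V ⊆ {z | m z = m g} :=
      convexHull_min hV (convex_hyperplane m.toLinearMap.isLinear (m g))
    exact hxy ((hsub hx).trans (hsub hy).symm)
  obtain hlt | hlt := hw.lt_or_gt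
  · exact ⟨-m, fun x hx ↦ congrArg Neg.neg (hmS x hx g hg), w, hwV, neg_lt_neg hlt⟩
  · exact ⟨m, fun x hx ↦ hmS x hx g hg, w, hwV, hlt⟩

/- Tilt the functional defining `G` about the affine span of `G ∪ {p}` until a further vertex of
`P` becomes maximal. -/
theorem IsFaceOf.exists_ssuperset_notMem (hG : IsFaceOf G P) (hP : IsPolytope P)
    (hdim : polyDim G + 1 < polyDim P) {p : Fin d → ℝ} (hpP : p ∈ P) (hpG : p ∉ G) :
    ∃ H, IsFaceOf H P ∧ G ⊂ H ∧ p ∉ H := by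
  obtain ⟨V, rfl⟩ := hP
  obtain ⟨⟨g, hg⟩, l, rfl⟩ := isFaceOf_iff.1 hG
  have hdim_insert : polyDim (insert p (l.toExposed (convexHull ℝ (V : Set (Fin d → ℝ))))) <
      polyDim (convexHull ℝ (V : Set (Fin d → ℝ))) := by
    simp only [polyDim_eq_finrank_vectorSpan] at hdim ⊢
    exact (finrank_vectorSpan_insert_le_set ℝ _ p).trans_lt hdim
  obtain ⟨m, hm, hmV⟩ := exists_strongDual_lt_of_polyDim_lt (.inr hg) hdim_insert
  have hV {w} (hw : w ∈ V) : w ∈ convexHull ℝ (V : Set (Fin d → ℝ)) := subset_convexHull ℝ _ hw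
  obtain ⟨r, hr_pos, hr, w, hwV, hmw, hw⟩ :=
    exists_pos_forall_add_mul_nonpos (s := V) (f := fun w ↦ m w - m g) (g := fun w ↦ l w - l g)
      (fun w hw ↦ sub_nonpos.2 (hg.2 w (hV hw)))
      (fun w hw hmw ↦ sub_neg.2 <| lt_of_mem_toExposed_of_notMem hg (hV hw) fun hwG ↦
        hmw.ne' (sub_eq_zero.2 (hm w (.inr hwG))))
      (by simpa using hmV)
  have hgH : g ∈ (m + r • l).toExposed (convexHull ℝ (V : Set (Fin d → ℝ))) := by
    refine mem_toExposed_convexHull_iff.2 ⟨hg.1, fun w hw ↦ ?_⟩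
    simp only [add_apply, smul_apply, smul_eq_mul]
    linarith [hr w hw]
  refine ⟨_, isFaceOf_iff.2 ⟨⟨g, hgH⟩, m + r • l, rfl⟩,
    Set.ssubset_iff_exists.2 ⟨fun x hx ↦ ?_, w, ?_, fun hwG ↦ ?_⟩, fun hpH ↦ ?_⟩
  · refine (mem_toExposed_iff_of_mem hgH).2 ⟨hx.1, ?_⟩
    simp [hm x (.inr hx), ((mem_toExposed_iff_of_mem hg).1 hx).2]
  · refine (mem_toExposed_iff_of_mem hgH).2 ⟨hV hwV, ?_⟩
    simp only [add_apply, smul_apply, smul_eq_mul]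
    linarith
  · exact hmw.ne' (sub_eq_zero.2 (hm w (.inr hwG)))
  · have hp_eq : m p + r * l p = m g + r * l g := ((mem_toExposed_iff_of_mem hgH).1 hpH).2
    rw [hm p (.inl rfl), add_right_inj, mul_right_inj' hr_pos.ne'] at hp_eq
    exact hpG ((mem_toExposed_iff_of_mem hg).2 ⟨hpP, hp_eq⟩)

theorem IsFaceOf.exists_isFacetOf_notMem (hG : IsFaceOf G P) (hP : IsPolytope P)
    {p : Fin d → ℝ} (hpP : p ∈ P) (hpG : p ∉ G) : ∃ F, IsFacetOf F P ∧ G ⊆ F ∧ p ∉ F := by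
  obtain ⟨F, hGF, ⟨hF, hpF⟩, hF_max⟩ :=
    (hP.finite_setOf_isFaceOf.subset fun _ h ↦ h.1 :
      {H | IsFaceOf H P ∧ p ∉ H}.Finite).exists_le_maximal ⟨hG, hpG⟩
  refine ⟨F, ⟨hF, ?_⟩, hGF, hpF⟩
  have hlt : polyDim F < polyDim P := hF.polyDim_lt fun h ↦ hpF (h ▸ hpP)
  by_contra hne
  obtain ⟨H, hH, hFH, hpH⟩ := hF.exists_ssuperset_notMem hP (by omega) hpP hpF
  exact hFH.2 (hF_max ⟨hH, hpH⟩ hFH.1)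

theorem IsFacetOf.ne (hF : IsFacetOf F P) : F ≠ P := by
  rintro rfl
  exact absurd hF.2 (by omega)

theorem IsFacetOf.eq_of_subset (hF : IsFacetOf F P) (hG : IsFaceOf G P) (hne : G ≠ P)
    (h : F ⊆ G) : F = G := by
  by_contra hFG
  have := (hF.1.of_subset hG h).polyDim_lt hFG
  have := hG.polyDim_lt hne
  have := hF.2
  omega

theorem IsFacetOf.exists_eq_inter (hC : IsFacetOf C F) (hF : IsFacetOf F P) (hP : IsPolytope P) :
    ∃ G, IsFacetOf G P ∧ G ≠ F ∧ F ∩ G = C := by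
  obtain ⟨p, hpF, hpC⟩ := Set.exists_of_ssubset (hC.1.subset.ssubset_of_ne hC.ne)
  obtain ⟨G, hG, hCG, hpG⟩ :=
    (hC.1.trans hF.1 hP).exists_isFacetOf_notMem hP (hF.1.subset hpF) hpC
  have hCFG : C ⊆ F ∩ G := Set.subset_inter hC.1.subset hCG
  have hFG : IsFaceOf (F ∩ G) F :=
    (hF.1.inter hG.1 (hC.1.1.mono hCFG)).of_subset hF.1 Set.inter_subset_left
  refine ⟨G, hG, fun h ↦ hpG (h ▸ hpF), (hC.eq_of_subset hFG (fun h ↦ hpG ?_) hCFG).symm⟩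
  exact (h.symm.subset hpF).2

theorem exists_isFaceOf_ne_of_isCompact (hP : IsCompact P) (hne : P.Nontrivial) :
    ∃ F, IsFaceOf F P ∧ F ≠ P := by
  obtain ⟨x, hx, y, hy, hxy⟩ := hne
  obtain ⟨l, hl⟩ := SeparatingDual.exists_separating_of_ne (R := ℝ) hxy
  obtain ⟨z, hzP, hz⟩ := hP.exists_isMaxOn ⟨x, hx⟩ l.continuous.continuousOn
  have hz_mem : z ∈ l.toExposed P := ⟨hzP, hz⟩
  refine ⟨l.toExposed P, isFaceOf_iff.2 ⟨⟨z, hz_mem⟩, l, rfl⟩, fun h ↦ hl ?_⟩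
  have eq_on_P {w} (hw : w ∈ P) : l w = l z :=
    ((mem_toExposed_iff_of_mem hz_mem).1 (h.symm.subset hw)).2
  exact (eq_on_P hx).trans (eq_on_P hy).symm

theorem nontrivial_of_one_le_polyDim (h : 1 ≤ polyDim P) : P.Nontrivial := by
  by_contra hP
  rw [polyDim_eq_finrank_vectorSpan,
    vectorSpan_of_subsingleton ℝ (Set.not_nontrivial_iff.1 hP), finrank_bot] at h
  omega

theorem IsPolytope.exists_isFacetOf (hP : IsPolytope P) (h : 1 ≤ polyDim P) :
    ∃ F, IsFacetOf F P := by
  obtain ⟨G, hG, hne⟩ :=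
    exists_isFaceOf_ne_of_isCompact hP.isCompact (nontrivial_of_one_le_polyDim h)
  obtain ⟨p, hpP, hpG⟩ := Set.exists_of_ssubset (hG.subset.ssubset_of_ne hne)
  obtain ⟨F, hF, -⟩ := hG.exists_isFacetOf_notMem hP hpP hpG
  exact ⟨F, hF⟩

theorem IsPolytope.exists_isVertexOf (hP : IsPolytope P) (hne : P.Nonempty) :
    ∃ v, IsVertexOf v P := by
  obtain ⟨F, hF⟩ := hP.finite_setOf_isFaceOf.exists_minimal ⟨P, isFaceOf_self hne⟩
  have hF_face : IsFaceOf F P := hF.prop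
  obtain ⟨v, hv⟩ | hF_nontrivial := hF_face.1.exists_eq_singleton_or_nontrivial
  · exact ⟨v, by rwa [IsVertexOf, ← hv]⟩
  · obtain ⟨G, hG, hGF⟩ :=
      exists_isFaceOf_ne_of_isCompact (hF_face.isPolytope hP).isCompact hF_nontrivial
    exact (hGF (hF.eq_of_subset (hG.trans hF_face hP) hG.subset)).elim

end Dimension

section SimplePolytope

variable {d : ℕ} {F G P : Set (Fin d → ℝ)} {v : Fin d → ℝ}

/-- The facets of `P` through the point `v`, counted in the definition of a simple polytope. -/
def facetsAt (P : Set (Fin d → ℝ)) (v : Fin d → ℝ) : Set (Set (Fin d → ℝ)) :=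
  {F | IsFacetOf F P ∧ v ∈ F}

theorem IsPolytope.finite_facetsAt (hP : IsPolytope P) : (facetsAt P v).Finite :=
  hP.finite_setOf_isFaceOf.subset fun _ h ↦ h.1.1

theorem facetsAt_subset_image (hP : IsPolytope P) (hF : IsFacetOf F P) (v : Fin d → ℝ) :
    facetsAt F v ⊆ (F ∩ ·) '' (facetsAt P v \ {F}) := by
  rintro C ⟨hC, hv⟩
  obtain ⟨G, hG, hGF, rfl⟩ := hC.exists_eq_inter hF hP
  exact ⟨G, ⟨⟨hG, hv.2⟩, hGF⟩, rfl⟩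

theorem ncard_image_facetsAt_lt (hP : IsPolytope P) (hF : F ∈ facetsAt P v) :
    ((F ∩ ·) '' (facetsAt P v \ {F})).ncard < (facetsAt P v).ncard :=
  (Set.ncard_image_le hP.finite_facetsAt.sdiff).trans_lt
    (Set.ncard_sdiff_singleton_lt_of_mem hF hP.finite_facetsAt)

theorem polyDim_le_ncard_facetsAt (hP : IsPolytope P) (hv : IsVertexOf v P) :
    polyDim P ≤ (facetsAt P v).ncard := by
  induction hk : polyDim P generalizing P with
  | zero => exact Nat.zero_le _
  | succ k ih =>
    obtain ⟨p, hpP, hpv⟩ : ∃ p ∈ P, p ∉ ({v} : Set _) := by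
      by_contra! h
      rw [hv.subset.antisymm h |>.symm, polyDim_singleton] at hk
      omega
    obtain ⟨F, hF, hvF, -⟩ := hv.exists_isFacetOf_notMem hP hpP hpv
    have hk_le : k ≤ (facetsAt F v).ncard :=
      ih (hF.1.isPolytope hP) (IsFaceOf.of_subset hv hF.1 hvF) (by have := hF.2; omega)
    have himage_le := Set.ncard_le_ncard (facetsAt_subset_image hP hF v)
      (hP.finite_facetsAt.sdiff.image (F ∩ ·))
    have himage_lt := ncard_image_facetsAt_lt hP ⟨hF, hvF rfl⟩
    omega

/- At a vertex `v` of `F ∩ G`, the at least `dim F` facets of `F` through `v` are among the traces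
on `F` of the `dim F` other facets of `P` through `v`, so each of these traces is a facet of `F`. -/
theorem IsSimplePolytope.isFacetOf_inter (hP : IsSimplePolytope P) (hF : IsFacetOf F P)
    (hG : IsFacetOf G P) (hne : F ≠ G) (h : (F ∩ G).Nonempty) : IsFacetOf (F ∩ G) F := by
  have hFG : IsFaceOf (F ∩ G) P := hF.1.inter hG.1 h
  obtain ⟨v, hv⟩ := (hFG.isPolytope hP.1).exists_isVertexOf h
  have hvFG : v ∈ F ∩ G := hv.subset rfl
  have hvP : IsVertexOf v P := IsFaceOf.trans hv hFG hP.1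
  have hvF : IsVertexOf v F := hvP.of_subset hF.1 (Set.singleton_subset_iff.2 hvFG.1)
  have hle := polyDim_le_ncard_facetsAt (hF.1.isPolytope hP.1) hvF
  have hlt := ncard_image_facetsAt_lt (v := v) hP.1 ⟨hF, hvFG.1⟩
  have hsimple : (facetsAt P v).ncard = polyDim P := hP.2 v hvP
  have heq := Set.eq_of_subset_of_ncard_le (facetsAt_subset_image hP.1 hF v)
    (by have := hF.2; omega) (hP.1.finite_facetsAt.sdiff.image (F ∩ ·))
  exact (heq.superset ⟨G, ⟨⟨hG, hvFG.2⟩, hne.symm⟩, rfl⟩ : F ∩ G ∈ facetsAt F v).1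

end SimplePolytope

section FacePoset

variable {d : ℕ} {P : Set (Fin d → ℝ)}

/-- The poset of nonempty faces of `P`, as compared by `CombEquiv`. -/
abbrev FacePoset (P : Set (Fin d → ℝ)) : Type :=
  {F : Set (Fin d → ℝ) // IsFaceOf F P}

instance [hP : Nonempty P] : OrderTop (FacePoset P) where
  top := ⟨P, isFaceOf_self (Set.nonempty_coe_sort.1 hP)⟩
  le_top F := F.2.subset

theorem IsPolytope.isCoatom_iff_isFacetOf [Nonempty P] (hP : IsPolytope P) {F : FacePoset P} :
    IsCoatom F ↔ IsFacetOf F.1 P := by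
  refine ⟨fun hF ↦ ?_, fun hF ↦ ⟨fun h ↦ hF.ne (congrArg Subtype.val h), fun G hFG ↦ ?_⟩⟩
  · obtain ⟨p, hpP, hpF⟩ :=
      Set.exists_of_ssubset (F.2.subset.ssubset_of_ne fun h ↦ hF.1 (Subtype.ext h))
    obtain ⟨G, hG, hFG, -⟩ := F.2.exists_isFacetOf_notMem hP hpP hpF
    rwa [show F = ⟨G, hG.1⟩ from
      (hF.le_iff_eq fun h ↦ hG.ne (congrArg Subtype.val h)).1 hFG |>.symm]
  · by_contra hne
    exact hFG.ne (Subtype.ext (hF.eq_of_subset G.2 (fun h ↦ hne (Subtype.ext h)) hFG.le))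

theorem IsPolytope.exists_isCoatom [Nonempty P] (hP : IsPolytope P) (h : 1 ≤ polyDim P) :
    ∃ F : FacePoset P, IsCoatom F :=
  have ⟨F, hF⟩ := hP.exists_isFacetOf h
  ⟨⟨F, hF.1⟩, hP.isCoatom_iff_isFacetOf.2 hF⟩

end FacePoset

section Product

theorem toExposed_coprod_prod {E F : Type*} [AddCommGroup E] [Module ℝ E] [TopologicalSpace E]
    [AddCommGroup F] [Module ℝ F] [TopologicalSpace F] (l : StrongDual ℝ E) (m : StrongDual ℝ F)
    (s : Set E) (t : Set F) :
    (l.coprod m).toExposed (s ×ˢ t) = l.toExposed s ×ˢ m.toExposed t := by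
  ext ⟨x, y⟩
  constructor
  · rintro ⟨⟨hx, hy⟩, h⟩
    exact ⟨⟨hx, fun x' hx' ↦ by simpa using h (x', y) ⟨hx', hy⟩⟩,
      ⟨hy, fun y' hy' ↦ by simpa using h (x, y') ⟨hx, hy'⟩⟩⟩
  · rintro ⟨⟨hx, hlx⟩, ⟨hy, hmy⟩⟩
    exact ⟨⟨hx, hy⟩, fun z hz ↦ add_le_add (hlx z.1 hz.1) (hmy z.2 hz.2)⟩

theorem toExposed_comp_preimage {E F : Type*} [AddCommGroup E] [Module ℝ E] [TopologicalSpace E]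
    [AddCommGroup F] [Module ℝ F] [TopologicalSpace F] (l : StrongDual ℝ F) {e : E →L[ℝ] F}
    (he : Function.Surjective e) (s : Set F) :
    (l.comp e).toExposed (e ⁻¹' s) = e ⁻¹' l.toExposed s := by
  ext x
  exact and_congr_right fun _ ↦ (he.forall (p := fun y ↦ y ∈ s → l y ≤ l (e x))).symm

variable {d₁ d₂ : ℕ} {Q : Set (Fin d₁ → ℝ)} {R : Set (Fin d₂ → ℝ)}

/-- The identification `ℝ^(d₁ + d₂) = ℝ^d₁ × ℝ^d₂` implicit in `polyProd`. -/
noncomputable def splitCoords (d₁ d₂ : ℕ) :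
    (Fin (d₁ + d₂) → ℝ) ≃L[ℝ] (Fin d₁ → ℝ) × (Fin d₂ → ℝ) :=
  ((LinearEquiv.funCongrLeft ℝ ℝ finSumFinEquiv).trans
    (LinearEquiv.sumArrowLequivProdArrow (Fin d₁) (Fin d₂) ℝ ℝ)).toContinuousLinearEquiv

theorem polyProd_eq_preimage : polyProd Q R = splitCoords d₁ d₂ ⁻¹' (Q ×ˢ R) :=
  rfl

theorem toExposed_polyProd (l : StrongDual ℝ (Fin d₁ → ℝ)) (m : StrongDual ℝ (Fin d₂ → ℝ)) :
    ((l.coprod m).comp (splitCoords d₁ d₂ : _ →L[ℝ] _)).toExposed (polyProd Q R) =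
      polyProd (l.toExposed Q) (m.toExposed R) := by
  simp only [polyProd_eq_preimage, ← toExposed_coprod_prod]
  exact toExposed_comp_preimage _ (splitCoords d₁ d₂).surjective _

theorem polyProd_nonempty_iff : (polyProd Q R).Nonempty ↔ Q.Nonempty ∧ R.Nonempty := by
  rw [polyProd_eq_preimage, (splitCoords d₁ d₂).surjective.nonempty_preimage,
    Set.prod_nonempty_iff]

theorem isFaceOf_polyProd_iff {F : Set (Fin (d₁ + d₂) → ℝ)} :
    IsFaceOf F (polyProd Q R) ↔ ∃ A B, IsFaceOf A Q ∧ IsFaceOf B R ∧ polyProd A B = F := by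
  simp only [isFaceOf_iff]
  constructor
  · rintro ⟨hF, l, rfl⟩
    obtain ⟨l, rfl⟩ : ∃ l' : StrongDual ℝ _, l = l'.comp (splitCoords d₁ d₂ : _ →L[ℝ] _) :=
      ⟨l.comp (splitCoords d₁ d₂).symm.toContinuousLinearMap, by ext; simp⟩
    rw [← l.coprod_comp_inl_inr, toExposed_polyProd] at hF ⊢
    obtain ⟨hA, hB⟩ := polyProd_nonempty_iff.1 hF
    exact ⟨_, _, ⟨hA, _, rfl⟩, ⟨hB, _, rfl⟩, rfl⟩
  · rintro ⟨_, _, ⟨hA, l, rfl⟩, ⟨hB, m, rfl⟩, rfl⟩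
    exact ⟨polyProd_nonempty_iff.2 ⟨hA, hB⟩, _, (toExposed_polyProd l m).symm⟩

theorem polyProd_subset_polyProd_iff {A A' : Set (Fin d₁ → ℝ)} {B B' : Set (Fin d₂ → ℝ)}
    (hA : A.Nonempty) (hB : B.Nonempty) : polyProd A B ⊆ polyProd A' B' ↔ A ⊆ A' ∧ B ⊆ B' := by
  rw [polyProd_eq_preimage, polyProd_eq_preimage,
    (splitCoords d₁ d₂).surjective.preimage_subset_preimage_iff, Set.prod_subset_prod_iff]
  simp [hA.ne_empty, hB.ne_empty]

/-- The nonempty faces of a product are the products of nonempty faces. -/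
noncomputable def facePosetPolyProd (Q : Set (Fin d₁ → ℝ)) (R : Set (Fin d₂ → ℝ)) :
    FacePoset Q × FacePoset R ≃o FacePoset (polyProd Q R) :=
  RelIso.ofSurjective
    (OrderEmbedding.ofMapLEIff
      (fun x ↦ ⟨polyProd x.1.1 x.2.1, isFaceOf_polyProd_iff.2 ⟨_, _, x.1.2, x.2.2, rfl⟩⟩)
      fun x _ ↦ polyProd_subset_polyProd_iff x.1.2.1 x.2.2.1)
    fun F ↦ by
      obtain ⟨A, B, hA, hB, h⟩ := isFaceOf_polyProd_iff.1 F.2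
      exact ⟨(⟨A, hA⟩, ⟨B, hB⟩), Subtype.ext h⟩

end Product

section FacetGraph

variable {d : ℕ} {P : Set (Fin d → ℝ)}

/-- The graph on the facets of `P` that joins two facets when they are disjoint; it is
disconnected when `P` is a nontrivial product. -/
def facetGraph (P : Set (Fin d → ℝ)) : SimpleGraph {F : Set (Fin d → ℝ) // IsFacetOf F P} where
  Adj F G := Disjoint F.1 G.1
  symm := ⟨fun _ _ h ↦ Disjoint.symm h⟩
  loopless := ⟨fun F h ↦ F.2.1.1.ne_empty (disjoint_self.1 h)⟩

theorem exists_le_le_of_isCoatom_prod {α β : Type*} [PartialOrder α] [PartialOrder β] [OrderTop α]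
    [OrderTop β] {x y : α × β} (hx : x.1 = ⊤) (hy : IsCoatom y) (hy₁ : y.1 ≠ ⊤) :
    ∃ z, z ≤ x ∧ z ≤ y := by
  have hy₂ : y.2 = ⊤ := by
    by_contra hy₂
    simp_all [← covBy_top_iff, Prod.covBy_iff]
  exact ⟨(y.1, x.2), ⟨hx ▸ le_top, le_rfl⟩, ⟨le_rfl, hy₂ ▸ le_top⟩⟩

theorem preconnected_forall {V : Type*} {Γ : SimpleGraph V} (hΓ : Γ.Preconnected) {p : V → Prop}
    (hp : ∀ u v, Γ.Adj u v → p u → p v) {u : V} (hu : p u) (v : V) : p v := by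
  have huv := (SimpleGraph.reachable_iff_reflTransGen u v).1 (hΓ u v)
  induction huv with
  | refl => exact hu
  | tail _ hadj ih => exact hp _ _ hadj ih

/- A facet of a product replaces exactly one of the two factors by a facet of it, and facets that
replace different factors intersect. -/
theorem indecomposable_of_preconnected (hP : IsPolytope P) (h : (facetGraph P).Preconnected) :
    Indecomposable P := by
  rintro ⟨d₁, d₂, Q, R, hQ, hR, hQ_dim, hR_dim, ⟨e₀⟩⟩
  have : Nonempty Q := (nontrivial_of_one_le_polyDim hQ_dim).nonempty.to_subtype
  have : Nonempty R := (nontrivial_of_one_le_polyDim hR_dim).nonempty.to_subtype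
  let e : FacePoset P ≃o FacePoset Q × FacePoset R := e₀.trans (facePosetPolyProd Q R).symm
  have : Nonempty P := ((e.symm ⊤).2.1.mono (e.symm ⊤).2.subset).to_subtype
  let toFace (F : {F // IsFacetOf F P}) : FacePoset P := ⟨F, F.2.1⟩
  have hcoatom (F) : IsCoatom (e (toFace F)) :=
    (e.isCoatom_iff _).2 (hP.isCoatom_iff_isFacetOf.2 F.2)
  have hsurj {x} (hx : IsCoatom x) : ∃ F, e (toFace F) = x :=
    ⟨⟨_, hP.isCoatom_iff_isFacetOf.1 ((e.symm.isCoatom_iff x).2 hx)⟩, e.apply_symm_apply x⟩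
  have hadj (F G) (hFG : Disjoint F.1 G.1) (hF : (e (toFace F)).1 = ⊤) :
      (e (toFace G)).1 = ⊤ := by
    by_contra hG
    obtain ⟨z, hzF, hzG⟩ := exists_le_le_of_isCoatom_prod hF (hcoatom G) hG
    obtain ⟨p, hp⟩ := (e.symm z).2.1
    exact Set.disjoint_left.1 hFG (e.symm_apply_le.2 hzF hp) (e.symm_apply_le.2 hzG hp)
  obtain ⟨A, hA⟩ : ∃ A : FacePoset Q, IsCoatom A := hQ.exists_isCoatom hQ_dim
  obtain ⟨B, hB⟩ : ∃ B : FacePoset R, IsCoatom B := hR.exists_isCoatom hR_dim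
  obtain ⟨F, hF⟩ := hsurj (x := (⊤, B)) (by simpa [← covBy_top_iff, Prod.covBy_iff] using hB)
  obtain ⟨G, hG⟩ := hsurj (x := (A, ⊤)) (by simpa [← covBy_top_iff, Prod.covBy_iff] using hA)
  have hG_top := preconnected_forall h hadj (u := F) (by rw [hF]) G
  exact hA.1 (by rwa [hG] at hG_top)

theorem IsSimplePolytope.indecomposable_of_preconnected_induce (hP : IsSimplePolytope P)
    {F : {F : Set (Fin d → ℝ) // IsFacetOf F P}}
    (h : ((facetGraph P).induce ((facetGraph P)ᶜ.neighborSet F)).Preconnected) :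
    Indecomposable F.1 := by
  have hmem {G} : G ∈ (facetGraph P)ᶜ.neighborSet F ↔ F ≠ G ∧ (F.1 ∩ G.1).Nonempty := by
    rw [SimpleGraph.mem_neighborSet, SimpleGraph.compl_adj, facetGraph,
      Set.not_disjoint_iff_nonempty_inter]
  let f : (facetGraph P).induce ((facetGraph P)ᶜ.neighborSet F) →g facetGraph F.1 :=
    { toFun G := ⟨F.1 ∩ G.1.1, hP.isFacetOf_inter F.2 G.1.2
        (Subtype.coe_ne_coe.2 (hmem.1 G.2).1) (hmem.1 G.2).2⟩
      map_rel' h := h.mono Set.inter_subset_right Set.inter_subset_right }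
  have hf : Function.Surjective f := by
    rintro ⟨C, hC⟩
    obtain ⟨G, hG, hGF, rfl⟩ := hC.exists_eq_inter F.2 hP.1
    exact ⟨⟨⟨G, hG⟩, hmem.2 ⟨fun h ↦ hGF (congrArg Subtype.val h.symm), hC.1.1⟩⟩, rfl⟩
  exact indecomposable_of_preconnected (F.2.1.isPolytope hP.1) (h.map f hf)

end FacetGraph

section Diagonals

variable {N k : ℕ}

theorem natCast_inj_of_lt {i j : ℕ} (hi : i < N) (hj : j < N) : (i : ZMod N) = j ↔ i = j :=
  (CharP.natCast_injOn_Iio (ZMod N) N).eq_iff hi hj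

theorem finset_pair_eq_pair_iff {α : Type*} [DecidableEq α] {a b c d : α} :
    ({a, b} : Finset α) = {c, d} ↔ a = c ∧ b = d ∨ a = d ∧ b = c := by
  rw [← Finset.coe_inj]
  push_cast
  exact Set.pair_eq_pair_iff

theorem isDiag_pair {c : ZMod N} (hk : 2 ≤ k) (hkN : 2 * k ≤ N) : IsDiag N {c, c + k} := by
  refine ⟨c, c + k, rfl, fun h ↦ ?_, fun h ↦ ?_, fun h ↦ ?_⟩
  · have := (natCast_inj_of_lt (N := N) (i := k) (j := 0) (by omega) (by omega)).1
      (by simpa using h)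
    omega
  · have := (natCast_inj_of_lt (N := N) (i := k) (j := 1) (by omega) (by omega)).1
      (by simpa using h)
    omega
  · have := (natCast_inj_of_lt (N := N) (i := k + 1) (j := 0) (by omega) (by omega)).1
      (by push_cast; linear_combination h)
    omega

theorem crosses_pair_iff {e : Finset (ZMod N)} {c d : ZMod N} :
    Crosses N e {c, d} ↔ ∃ a b, e = {a, b} ∧ StrictBtw N a c b ∧ StrictBtw N b d a := by
  constructor
  · rintro ⟨a, b, c', d', he, hcd, hac, hbd⟩
    obtain ⟨rfl, rfl⟩ | ⟨rfl, rfl⟩ := finset_pair_eq_pair_iff.1 hcd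
    · exact ⟨a, b, he, hac, hbd⟩
    · exact ⟨b, a, he.trans (Finset.pair_comm a b), hbd, hac⟩
  · rintro ⟨a, b, he, hac, hbd⟩
    exact ⟨a, b, c, d, he, rfl, hac, hbd⟩

variable [NeZero N]

theorem IsDiag.exists_eq_pair {e : Finset (ZMod N)} (he : IsDiag N e) :
    ∃ (c : ZMod N) (k : ℕ), 2 ≤ k ∧ 2 * k ≤ N ∧ e = {c, c + k} := by
  obtain ⟨a, b, rfl, hba, hba_succ, hba_pred⟩ := he
  obtain ⟨k, hkN, rfl⟩ : ∃ k < N, b = a + (k : ℕ) := ⟨(b - a).val, ZMod.val_lt _, by simp⟩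
  have hk_ne_zero : k ≠ 0 := by rintro rfl; simp at hba
  have hk_ne_one : k ≠ 1 := by rintro rfl; simp at hba_succ
  have hk_ne_pred : k + 1 ≠ N := by
    intro h
    have hcast : ((k + 1 : ℕ) : ZMod N) = 0 := h ▸ ZMod.natCast_self (k + 1)
    push_cast at hcast
    exact hba_pred (by linear_combination hcast)
  obtain hle | hlt := le_or_gt (2 * k) N
  · exact ⟨a, k, by omega, hle, rfl⟩
  · refine ⟨a + k, N - k, by omega, by omega, ?_⟩
    rw [Nat.cast_sub hkN.le, ZMod.natCast_self, Finset.pair_comm]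
    ring_nf

theorem strictBtw_add_natCast_iff {a c : ZMod N} (hk : k < N) :
    StrictBtw N a c (a + k) ↔ ∃ i : ℕ, 0 < i ∧ i < k ∧ c = a + i := by
  rw [StrictBtw, add_sub_cancel_left, ZMod.val_natCast_of_lt hk]
  constructor
  · rintro ⟨hpos, hlt⟩
    exact ⟨(c - a).val, hpos, hlt, by simp⟩
  · rintro ⟨i, hpos, hlt, rfl⟩
    rw [add_sub_cancel_left, ZMod.val_natCast_of_lt (hlt.trans hk)]
    exact ⟨hpos, hlt⟩

end Diagonals

section Diameters

variable {n : ℕ}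

theorem natCast_add_self (n : ℕ) : (n : ZMod (2 * n)) + n = 0 := by
  rw [← Nat.cast_add, ← two_mul, ZMod.natCast_self]

theorem add_natCast_add_natCast_self (a : ZMod (2 * n)) : a + n + n = a := by
  rw [add_assoc, natCast_add_self, add_zero]

theorem diameter_pair_eq_iff {a b : ZMod (2 * n)} :
    ({a, a + n} : Finset (ZMod (2 * n))) = {b, b + n} ↔ a = b ∨ a = b + n := by
  rw [finset_pair_eq_pair_iff]
  constructor
  · rintro (⟨h, -⟩ | ⟨h, -⟩)
    exacts [.inl h, .inr h]
  · rintro (rfl | rfl)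
    exacts [.inl ⟨rfl, rfl⟩, .inr ⟨rfl, add_natCast_add_natCast_self b⟩]

theorem centralSym_pair (a b : ZMod (2 * n)) : centralSym n {a, b} = {a + n, b + n} := by
  simp [centralSym, Finset.image_insert]

variable [NeZero n] {k : ℕ}

theorem crosses_diameter_iff {e : Finset (ZMod (2 * n))} (he : IsDiameter n e) (hkn : k ≤ n)
    (c : ZMod (2 * n)) :
    Crosses (2 * n) e {c, c + k} ↔ ∃ i : ℕ, 0 < i ∧ i < k ∧ e = {c + i, c + i + n} := by
  have hn : n < 2 * n := by have := NeZero.pos n; omega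
  have hbtw {a b c : ZMod (2 * n)} (hab : a + n = b) :
      StrictBtw (2 * n) a c b ↔ ∃ i : ℕ, 0 < i ∧ i < n ∧ c = a + i :=
    hab ▸ strictBtw_add_natCast_iff hn
  rw [crosses_pair_iff]
  constructor
  · rintro ⟨a, b, hab, hac, hbd⟩
    have hab' : a + n = b := by
      obtain ⟨a', rfl⟩ := he
      obtain ⟨rfl, rfl⟩ | ⟨rfl, rfl⟩ := finset_pair_eq_pair_iff.1 hab
      exacts [rfl, add_natCast_add_natCast_self _]
    have hba : b + n = a := hab' ▸ add_natCast_add_natCast_self a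
    obtain ⟨i, -, hin, rfl⟩ := (hbtw hab').1 hac
    obtain ⟨j, hj_pos, hjn, hj⟩ := (hbtw hba).1 hbd
    have hij : i + k = n + j := by
      refine (natCast_inj_of_lt (N := 2 * n) (by omega) (by omega)).1 ?_
      push_cast
      linear_combination hj - hab'
    refine ⟨n - i, by omega, by omega, ?_⟩
    rw [hab, Nat.cast_sub hin.le, add_add_sub_cancel, hab', hba, Finset.pair_comm]
  · rintro ⟨i, hi_pos, hik, rfl⟩
    refine ⟨c + i + n, c + i, Finset.pair_comm _ _,
      (hbtw (add_natCast_add_natCast_self _)).2 ⟨n - i, by omega, by omega, ?_⟩,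
      (hbtw rfl).2 ⟨k - i, by omega, by omega, ?_⟩⟩
    · rw [Nat.cast_sub (hik.le.trans hkn)]
      linear_combination -natCast_add_self n
    · rw [Nat.cast_sub hik.le]
      ring

end Diameters

section Model

variable {n k : ℕ}

theorem not_isDiameter_pair (hk : 0 < k) (hkn : k < n) (c : ZMod (2 * n)) :
    ¬ IsDiameter n {c, c + k} := by
  rintro ⟨a, h⟩
  have hcast : (k : ZMod (2 * n)) = n := by
    obtain ⟨rfl, h⟩ | ⟨rfl, h⟩ := finset_pair_eq_pair_iff.1 h
    · exact add_left_cancel h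
    · linear_combination h - natCast_add_self n
  exact hkn.ne ((natCast_inj_of_lt (by omega) (by omega)).1 hcast)

/-- The diameters of the `2n`-gon, without their colors. -/
abbrev Diameter (n : ℕ) : Type :=
  {e : Finset (ZMod (2 * n)) // IsDiag (2 * n) e ∧ IsDiameter n e}

/-- A colored diameter as an element of `M_n`; `true` is red and `false` is blue. -/
def colored : Bool → Diameter n → MSet n
  | true, D => ⟨.red D, D.2⟩
  | false, D => ⟨.blue D, D.2⟩

theorem colored_inj {b b' : Bool} {D D' : Diameter n} :
    colored b D = colored b' D' ↔ b = b' ∧ D = D' := by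
  cases b <;> cases b' <;> simp [colored, MSet, Subtype.ext_iff]

/-- The graph on `M_n` that joins two distinct elements when they are incompatible; it is the
combinatorial model of `facetGraph`. -/
def incompatGraph (n : ℕ) : SimpleGraph (MSet n) :=
  .fromRel fun x y ↦ ¬ DCompat n x.1 y.1

theorem incompatGraph_adj_colored_colored_iff {b b' : Bool} {D D' : Diameter n} :
    (incompatGraph n).Adj (colored b D) (colored b' D') ↔ b ≠ b' ∧ D ≠ D' := by
  have hcompat (b b' : Bool) (D D' : Diameter n) :
      DCompat n (colored b D).1 (colored b' D').1 ↔ b = b' ∨ D = D' := by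
    cases b <;> cases b' <;> simp [colored, DCompat, Subtype.ext_iff]
  simp only [incompatGraph, SimpleGraph.fromRel_adj, hcompat, ne_eq, colored_inj]
  grind

/-- The element `{d, d̄}` of `M_n` with `d = {c, c + k}`. -/
def diagPair (c : ZMod (2 * n)) (hk : 2 ≤ k) (hkn : k < n) : MSet n :=
  ⟨.pair {{c, c + k}, centralSym n {c, c + k}}, _, isDiag_pair hk (by omega),
    not_isDiameter_pair (by omega) hkn c, rfl⟩

theorem colored_ne_diagPair {b : Bool} {D : Diameter n} {c : ZMod (2 * n)} {hk : 2 ≤ k}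
    {hkn : k < n} : colored b D ≠ diagPair c hk hkn := by
  cases b <;> exact fun h ↦ nomatch congrArg Subtype.val h

/-- The diameter through the vertices `a` and `a + n`. -/
def diameter (n : ℕ) [n.AtLeastTwo] (a : ZMod (2 * n)) : Diameter n :=
  ⟨{a, a + n}, isDiag_pair Nat.AtLeastTwo.prop le_rfl, a, rfl⟩

variable [n.AtLeastTwo]

theorem diameter_eq_iff {a b : ZMod (2 * n)} : diameter n a = diameter n b ↔ a = b ∨ a = b + n :=
  Subtype.ext_iff.trans diameter_pair_eq_iff

theorem diameter_add_right_inj {a b : ZMod (2 * n)} (t : ZMod (2 * n)) :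
    diameter n (a + t) = diameter n (b + t) ↔ diameter n a = diameter n b := by
  rw [diameter_eq_iff, diameter_eq_iff, add_right_comm, add_left_inj, add_left_inj]

theorem diameter_add_natCast_inj {i j : ℕ} (hi : i < n) (hj : j < n) (a : ZMod (2 * n)) :
    diameter n (a + i) = diameter n (a + j) ↔ i = j := by
  refine ⟨fun h ↦ ?_, fun h ↦ h ▸ rfl⟩
  rw [diameter_eq_iff, add_assoc, add_right_inj, add_right_inj, ← Nat.cast_add,
    natCast_inj_of_lt (by omega) (by omega), natCast_inj_of_lt (by omega) (by omega)] at h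
  omega

theorem diameter_natCast_injective : Function.Injective fun i : Fin n ↦ diameter n i :=
  fun i j h ↦ Fin.ext <| (diameter_add_natCast_inj i.2 j.2 0).1 (by simpa using h)

theorem exists_diameter_notMem (s : Finset (Diameter n)) (hs : s.card < n) : ∃ D, D ∉ s := by
  classical
  obtain ⟨D, -, hD⟩ := Finset.exists_mem_notMem_of_card_lt_card
    (s := s) (t := Finset.univ.image fun i : Fin n ↦ diameter n i)
    (by rwa [Finset.card_image_of_injective _ diameter_natCast_injective, Finset.card_fin])
  exact ⟨D, hD⟩

theorem diagPair_eq_of_diameter_eq {a c : ZMod (2 * n)} (hk : 2 ≤ k) (hkn : k < n)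
    (h : diameter n a = diameter n c) : diagPair a hk hkn = diagPair c hk hkn := by
  obtain rfl | rfl := diameter_eq_iff.1 h
  · rfl
  · refine Subtype.ext (congrArg DElem.pair ?_)
    simp only [centralSym_pair, add_natCast_add_natCast_self, add_right_comm _ (n : ZMod (2 * n))]
    exact Finset.pair_comm _ _

theorem exists_eq_colored_or_eq_diagPair (x : MSet n) :
    (∃ b D, x = colored b D) ∨ ∃ c k, ∃ (hk : 2 ≤ k) (hkn : k < n), x = diagPair c hk hkn := by
  match x with
  | ⟨.red D, hD⟩ => exact .inl ⟨true, ⟨D, hD⟩, rfl⟩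
  | ⟨.blue D, hD⟩ => exact .inl ⟨false, ⟨D, hD⟩, rfl⟩
  | ⟨.pair s, hs⟩ =>
    obtain ⟨e, he, he_diam, rfl⟩ := hs
    obtain ⟨c, k, hk, hkn, rfl⟩ := he.exists_eq_pair
    have hk_ne : k ≠ n := by
      rintro rfl
      exact he_diam ⟨c, rfl⟩
    exact .inr ⟨c, k, hk, by omega, rfl⟩

theorem incompatGraph_adj_diagPair_colored_iff {c : ZMod (2 * n)} {hk : 2 ≤ k} {hkn : k < n}
    {b : Bool} {D : Diameter n} :
    (incompatGraph n).Adj (diagPair c hk hkn) (colored b D) ↔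
      ∃ i : ℕ, 0 < i ∧ i < k ∧ D = diameter n (c + i) := by
  have hcross (c : ZMod (2 * n)) : Crosses (2 * n) D {c, c + k} ↔
      ∃ i : ℕ, 0 < i ∧ i < k ∧ D = diameter n (c + i) := by
    simp only [crosses_diameter_iff D.2.2 hkn.le, Subtype.ext_iff, diameter]
  have hsymm : Crosses (2 * n) D (centralSym n {c, c + k}) ↔ Crosses (2 * n) D {c, c + k} := by
    have hshift (i : ℕ) : diameter n (c + n + i) = diameter n (c + i) :=
      diameter_eq_iff.2 (.inr (add_right_comm _ _ _))
    rw [centralSym_pair, add_right_comm, hcross, hcross]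
    simp only [hshift]
  calc
    _ ↔ ¬ DCompat n (diagPair c hk hkn).1 (colored b D).1 := by
      have hcomm : DCompat n (colored b D).1 (diagPair c hk hkn).1 ↔
          DCompat n (diagPair c hk hkn).1 (colored b D).1 := by
        cases b <;> rfl
      rw [incompatGraph, SimpleGraph.fromRel_adj, hcomm, or_self,
        and_iff_right colored_ne_diagPair.symm]
    _ ↔ Crosses (2 * n) D {c, c + k} ∨ Crosses (2 * n) D (centralSym n {c, c + k}) := by
      cases b <;> simp [colored, diagPair, DCompat, imp_iff_not_or]
    _ ↔ _ := by rw [hsymm, or_self, hcross]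

end Model

section IncompatGraph

theorem preconnected_of_crown {V ι : Type*} {Γ : SimpleGraph V} (f : Bool → ι → V)
    (hι : ∀ i j : ι, ∃ k, k ≠ i ∧ k ≠ j) (hf : ∀ b i j, i ≠ j → Γ.Adj (f b i) (f (!b) j))
    (hΓ : ∀ v, ∃ b i, Γ.Reachable v (f b i)) : Γ.Preconnected := by
  have hsame (b i j) : Γ.Reachable (f b i) (f b j) := by
    obtain ⟨k, hki, hkj⟩ := hι i j
    exact (hf b i k hki.symm).reachable.trans (hf b j k hkj.symm).reachable.symm
  have hall (b i b' j) : Γ.Reachable (f b i) (f b' j) := by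
    obtain rfl | rfl := Bool.eq_or_eq_not b' b
    · exact hsame b' i j
    · obtain ⟨k, hki, -⟩ := hι i i
      exact (hf b i k hki.symm).reachable.trans (hsame _ k j)
  intro u v
  obtain ⟨b, i, hu⟩ := hΓ u
  obtain ⟨b', j, hv⟩ := hΓ v
  exact (hu.trans (hall b i b' j)).trans hv.symm

variable {n k : ℕ} [n.AtLeastTwo]

theorem preconnected_incompatGraph (hn : 3 ≤ n) : (incompatGraph n).Preconnected := by
  classical
  refine preconnected_of_crown colored (fun D E ↦ ?_) (fun b D E h ↦ ?_) fun x ↦ ?_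
  · simpa using exists_diameter_notMem {D, E} (Finset.card_le_two.trans_lt hn)
  · exact incompatGraph_adj_colored_colored_iff.2 ⟨b.not_ne_self.symm, h⟩
  · obtain ⟨b, D, rfl⟩ | ⟨c, k, hk, hkn, rfl⟩ := exists_eq_colored_or_eq_diagPair x
    · exact ⟨b, D, .rfl⟩
    · refine ⟨true, diameter n (c + (1 : ℕ)), SimpleGraph.Adj.reachable ?_⟩
      exact incompatGraph_adj_diagPair_colored_iff.2 ⟨1, one_pos, hk, rfl⟩

/- `D` with its opposite color is adjacent to every other diameter of the color of `D`. -/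
theorem preconnected_induce_compl_neighborSet_colored (b : Bool) (D : Diameter n) :
    ((incompatGraph n).induce ((incompatGraph n)ᶜ.neighborSet (colored b D))).Preconnected := by
  have hhub : (incompatGraph n)ᶜ.Adj (colored b D) (colored (!b) D) := by
    simp [SimpleGraph.compl_adj, colored_inj, incompatGraph_adj_colored_colored_iff]
  have hmem {E : Diameter n} (hE : D ≠ E) : (incompatGraph n)ᶜ.Adj (colored b D) (colored b E) := by
    simp [SimpleGraph.compl_adj, colored_inj, incompatGraph_adj_colored_colored_iff, hE]
  set Γ := (incompatGraph n).induce ((incompatGraph n)ᶜ.neighborSet (colored b D))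
  have hadj {E : Diameter n} (hE : D ≠ E) : Γ.Adj ⟨_, hmem hE⟩ ⟨_, hhub⟩ :=
    incompatGraph_adj_colored_colored_iff.2 ⟨b.not_ne_self.symm, hE.symm⟩
  suffices h : ∀ y, Γ.Reachable y ⟨_, hhub⟩ from fun y z ↦ (h y).trans (h z).symm
  rintro ⟨y, hy⟩
  obtain ⟨hne, hcompat⟩ := (SimpleGraph.compl_adj _ _ _).1 hy
  obtain ⟨b', E, rfl⟩ | ⟨c, k, hk, hkn, rfl⟩ := exists_eq_colored_or_eq_diagPair y
  · obtain rfl | rfl := Bool.eq_or_eq_not b' b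
    · exact (hadj fun h ↦ hne (h ▸ rfl)).reachable
    · obtain rfl : D = E := by
        by_contra hDE
        exact hcompat (incompatGraph_adj_colored_colored_iff.2 ⟨b.not_ne_self.symm, hDE⟩)
      exact .rfl
  · have hcross (b : Bool) : (incompatGraph n).Adj (diagPair c hk hkn)
        (colored b (diameter n (c + (1 : ℕ)))) :=
      incompatGraph_adj_diagPair_colored_iff.2 ⟨1, one_pos, hk, rfl⟩
    have hD : D ≠ diameter n (c + (1 : ℕ)) := by
      rintro rfl
      exact hcompat (hcross b).symm
    have hadj_pair : Γ.Adj ⟨_, hy⟩ ⟨_, hmem hD⟩ := hcross b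
    exact hadj_pair.reachable.trans (hadj hD).reachable

theorem incompatGraph_adj_diagPair_two_colored_iff {hn : 2 < n} {c : ZMod (2 * n)} {b : Bool}
    {D : Diameter n} :
    (incompatGraph n).Adj (diagPair c le_rfl hn) (colored b D) ↔ D = diameter n (c + 1) := by
  rw [incompatGraph_adj_diagPair_colored_iff]
  refine ⟨fun ⟨i, hi, hi_two, hD⟩ ↦ ?_, fun hD ↦ ⟨1, one_pos, one_lt_two, by simpa using hD⟩⟩
  obtain rfl : i = 1 := by omega
  simpa using hD

theorem exists_diameter_ne_of_diagPair_ne {hn : 2 < n} {a c : ZMod (2 * n)} {hk : 2 ≤ k}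
    {hkn : k < n} (h : diagPair a hk hkn ≠ diagPair c le_rfl hn) :
    ∃ i : ℕ, 0 < i ∧ i < k ∧ diameter n (a + i) ≠ diameter n (c + 1) := by
  by_contra! hcross
  obtain rfl | hk_two := hk.eq_or_lt
  · have hone : diameter n (a + 1) = diameter n (c + 1) := by
      simpa using hcross 1 one_pos one_lt_two
    exact h (diagPair_eq_of_diameter_eq _ _ ((diameter_add_right_inj _).1 hone))
  · have hone_two := (hcross 1 one_pos hk).trans (hcross 2 two_pos hk_two).symm
    rw [diameter_add_natCast_inj (by omega) hn] at hone_two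
    omega

theorem preconnected_induce_compl_neighborSet_diagPair_two (hn : 4 ≤ n) (c : ZMod (2 * n)) :
    ((incompatGraph n).induce ((incompatGraph n)ᶜ.neighborSet
      (diagPair c le_rfl (show 2 < n by omega)))).Preconnected := by
  classical
  have hmem (b : Bool) {D : Diameter n} : (incompatGraph n)ᶜ.Adj
      (diagPair c le_rfl (by omega)) (colored b D) ↔ D ≠ diameter n (c + 1) := by
    rw [SimpleGraph.compl_adj, incompatGraph_adj_diagPair_two_colored_iff,
      and_iff_right colored_ne_diagPair.symm]
  refine preconnected_of_crown (ι := {D // D ≠ diameter n (c + 1)})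
    (fun b D ↦ ⟨_, (hmem b).2 D.2⟩) (fun D E ↦ ?_) (fun b D E h ↦ ?_) fun ⟨y, hy⟩ ↦ ?_
  · obtain ⟨D', hD'⟩ := exists_diameter_notMem {D.1, E.1, diameter n (c + 1)}
      (Finset.card_le_three.trans_lt hn)
    simp only [Finset.mem_insert, Finset.mem_singleton, not_or] at hD'
    exact ⟨⟨D', hD'.2.2⟩, fun h ↦ hD'.1 (congrArg Subtype.val h),
      fun h ↦ hD'.2.1 (congrArg Subtype.val h)⟩
  · exact incompatGraph_adj_colored_colored_iff.2 ⟨b.not_ne_self.symm, Subtype.coe_ne_coe.2 h⟩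
  · obtain ⟨b, D, rfl⟩ | ⟨a, k, hk, hkn, rfl⟩ := exists_eq_colored_or_eq_diagPair y
    · exact ⟨b, ⟨D, (hmem b).1 hy⟩, .rfl⟩
    · obtain ⟨i, hi, hik, hne⟩ := exists_diameter_ne_of_diagPair_ne hy.1.symm
      have hcross : (incompatGraph n).Adj (diagPair a hk hkn)
          (colored true (diameter n (a + i))) :=
        incompatGraph_adj_diagPair_colored_iff.2 ⟨i, hi, hik, rfl⟩
      refine ⟨true, ⟨_, hne⟩, SimpleGraph.Adj.reachable ?_⟩
      exact hcross

theorem diagPair_two_eq_iff {hn : 2 < n} {a c : ZMod (2 * n)} :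
    diagPair a le_rfl hn = diagPair c le_rfl hn ↔ diameter n a = diameter n c := by
  refine ⟨fun h ↦ ?_, diagPair_eq_of_diameter_eq le_rfl hn⟩
  have hcross : (incompatGraph n).Adj (diagPair a le_rfl hn)
      (colored true (diameter n (a + 1))) :=
    incompatGraph_adj_diagPair_two_colored_iff.2 rfl
  rw [h, incompatGraph_adj_diagPair_two_colored_iff] at hcross
  exact (diameter_add_right_inj _).1 hcross

theorem three_mul_le_ncard (hn : 2 < n) {s : Set (MSet n)} (hs : s.Finite)
    (hcolored : ∀ b D, colored b D ∈ s) (hpair : ∀ c, diagPair c le_rfl hn ∈ s) :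
    3 * n ≤ s.ncard := by
  let f : Bool × Fin n ⊕ Fin n → MSet n :=
    Sum.elim (fun p ↦ colored p.1 (diameter n (p.2 : ℕ))) fun i ↦ diagPair (i : ℕ) le_rfl hn
  have hf : Function.Injective f := by
    refine .sumElim (fun p q h ↦ ?_) (fun i j h ↦ ?_) fun _ _ ↦ colored_ne_diagPair
    · obtain ⟨hb, hD⟩ := colored_inj.1 h
      exact Prod.ext hb (diameter_natCast_injective hD)
    · exact diameter_natCast_injective (diagPair_two_eq_iff.1 h)
  have hf_mem : Set.range f ⊆ s := by
    rintro _ ⟨p | i, rfl⟩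
    exacts [hcolored _ _, hpair _]
  calc
    3 * n = Nat.card (Bool × Fin n ⊕ Fin n) := by simp; ring
    _ = (Set.range f).ncard := (Set.ncard_range_of_injective hf).symm
    _ ≤ s.ncard := Set.ncard_le_ncard hf_mem hs

end IncompatGraph

section Realization

variable {n d : ℕ} {P : Set (Fin d → ℝ)}

/-- A realization of the type `D_n` model identifies its incompatibility graph with the facet
graph. -/
noncomputable def RealizesDWith.graphIso {φ : MSet n → Set (Fin d → ℝ)}
    (hP : RealizesDWith n P φ) : incompatGraph n ≃g facetGraph P where
  toEquiv := .ofBijective (fun x ↦ ⟨φ x, hP.2.2.2.1 x⟩)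
    ⟨fun _ _ h ↦ hP.2.2.2.2.1 (congrArg Subtype.val h),
      fun F ↦ (hP.2.2.2.2.2.1 F.1 F.2).imp fun _ ↦ Subtype.ext⟩
  map_rel_iff' {x y} := by
    obtain ⟨-, -, -, hfacet, -, -, hcompat⟩ := hP
    by_cases hxy : x = y
    · simp [hxy]
    · have hcompat' := hcompat y x (Ne.symm hxy)
      rw [Set.inter_comm] at hcompat'
      change Disjoint (φ x) (φ y) ↔ _
      rw [incompatGraph, SimpleGraph.fromRel_adj, ← hcompat x y hxy, ← hcompat', or_self,
        and_iff_right hxy, Set.not_nonempty_iff_eq_empty, Set.disjoint_iff_inter_eq_empty]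

theorem preconnected_induce_compl_neighborSet_of_iso {V W : Type*} {Γ : SimpleGraph V}
    {Δ : SimpleGraph W} (e : Γ ≃g Δ) {x : V} (h : (Γ.induce (Γᶜ.neighborSet x)).Preconnected) :
    (Δ.induce (Δᶜ.neighborSet (e x))).Preconnected := by
  have hmem {y : V} : y ∈ Γᶜ.neighborSet x ↔ e y ∈ Δᶜ.neighborSet (e x) := by
    simp only [SimpleGraph.mem_neighborSet, SimpleGraph.compl_adj, e.map_adj_iff,
      e.injective.ne_iff]
  refine h.map (SimpleGraph.induceHom e.toHom fun y ↦ hmem.1) fun ⟨z, hz⟩ ↦ ?_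
  obtain ⟨y, rfl⟩ := e.surjective z
  exact ⟨⟨y, hmem.2 hz⟩, rfl⟩

theorem typeD_indecomposable_general (hn : 4 ≤ n) (hP : IsSimplePolytope P)
    (e : incompatGraph n ≃g facetGraph P) :
    Indecomposable P ∧
    3 * n ≤ {F : Set (Fin d → ℝ) | IsFacetOf F P ∧ Indecomposable F}.ncard := by
  have : n.AtLeastTwo := ⟨by omega⟩
  have hfacet {x : MSet n} (h : ((incompatGraph n).induce
      ((incompatGraph n)ᶜ.neighborSet x)).Preconnected) : Indecomposable (e x).1 :=
    hP.indecomposable_of_preconnected_induce (preconnected_induce_compl_neighborSet_of_iso e h)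
  refine ⟨indecomposable_of_preconnected hP.1
    (e.preconnected_iff.1 (preconnected_incompatGraph (by omega))), ?_⟩
  set 𝒮 := {F : Set (Fin d → ℝ) | IsFacetOf F P ∧ Indecomposable F}
  have h𝒮 : 𝒮.Finite := hP.1.finite_setOf_isFaceOf.subset fun F hF ↦ hF.1.1
  have he : Function.Injective fun x ↦ (e x).1 := Subtype.val_injective.comp e.injective
  have h𝒮_range : 𝒮 ⊆ Set.range fun x ↦ (e x).1 := fun F hF ↦ ⟨e.symm ⟨F, hF.1⟩, by simp⟩
  rw [← Set.ncard_preimage_of_injective_subset_range he h𝒮_range]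
  exact three_mul_le_ncard (by omega) (h𝒮.preimage he.injOn)
    (fun b D ↦ ⟨(e _).2, hfacet (preconnected_induce_compl_neighborSet_colored b D)⟩)
    fun c ↦ ⟨(e _).2, hfacet (preconnected_induce_compl_neighborSet_diagPair_two hn c)⟩

end Realization

/-- for `n ≥ 4`, a type `D_n` generalized associahedron is
indecomposable and has at least `2n + 3` indecomposable facets. -/
theorem typeD_indecomposable (n d : ℕ) (hn : 4 ≤ n) (P : Set (Fin d → ℝ))
    (φ : MSet n → Set (Fin d → ℝ)) (hP : RealizesDWith n P φ) :
    Indecomposable P ∧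
    2 * n + 3 ≤ {F : Set (Fin d → ℝ) | IsFacetOf F P ∧ Indecomposable F}.ncard :=
  (typeD_indecomposable_general hn hP.2.1.1 hP.graphIso).imp_right fun h ↦ by omega

end GalD
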